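/- Let (R, Ad_Γ) be a graded von Neumann algebra containing an odd unitary U (i.e., U ∈ R^(1) unitary). If E ∈ R^(0) is a projection that is finite relative to the von Neumann algebra R^(0), then E is finite relative to R. -/

import Mathlib

noncomputable section

variable {H : Type*} [NormedAddCommGroup H] [InnerProductSpace ℂ H] [CompleteSpace H]

/-- A self-adjoint unitary operator. -/
def IsSAU (Γ : H →L[ℂ] H) : Prop := star Γ = Γ ∧ Γ * Γ = 1

/-- The even part of a graded set of operators. -/
def evenPart (R : Set (H →L[ℂ] H)) (Γ : H →L[ℂ] H) : Set (H →L[ℂ] H) :=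
  {x | x ∈ R ∧ Γ * x * Γ = x}

/-- The odd part of a graded set of operators. -/
def oddPart (R : Set (H →L[ℂ] H)) (Γ : H →L[ℂ] H) : Set (H →L[ℂ] H) :=
  {x | x ∈ R ∧ Γ * x * Γ = -x}

/-- The center of a set of operators. -/
def centerSet (R : Set (H →L[ℂ] H)) : Set (H →L[ℂ] H) :=
  {x | x ∈ R ∧ ∀ y ∈ R, x * y = y * x}

/-- An (orthogonal) projection operator. -/
def IsProjOp (e : H →L[ℂ] H) : Prop := e * e = e ∧ star e = e

/-- `e` is a subprojection of `f`. -/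
def SubProj (e f : H →L[ℂ] H) : Prop := e * f = e ∧ f * e = e

/-- Murray–von Neumann equivalence of projections relative to `M`. -/
def MvNEquiv (M : Set (H →L[ℂ] H)) (e f : H →L[ℂ] H) : Prop :=
  ∃ v ∈ M, star v * v = e ∧ v * star v = f

/-- `e` is finite relative to `M`. -/
def FiniteProj (M : Set (H →L[ℂ] H)) (e : H →L[ℂ] H) : Prop :=
  ∀ f ∈ M, IsProjOp f → SubProj f e → MvNEquiv M f e → f = e

/-- `e` is an abelian projection relative to `M`: the corner `eMe` is commutative. -/
def AbelianProj (M : Set (H →L[ℂ] H)) (e : H →L[ℂ] H) : Prop :=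
  ∀ x ∈ M, ∀ y ∈ M, (e * x * e) * (e * y * e) = (e * y * e) * (e * x * e)

/-- A von Neumann algebra (given as a set) is of type III: no nonzero finite projections. -/
def TypeIII (M : Set (H →L[ℂ] H)) : Prop :=
  ∀ e ∈ M, IsProjOp e → FiniteProj M e → e = 0

/-- Type II₁ : finite with no nonzero abelian projections. -/
def TypeII1 (M : Set (H →L[ℂ] H)) : Prop :=
  FiniteProj M 1 ∧ ∀ e ∈ M, IsProjOp e → AbelianProj M e → e = 0

/-- Type I_n : the identity is the sum of `n` orthogonal, mutually equivalent
abelian projections. -/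
def TypeI (M : Set (H →L[ℂ] H)) (n : Cardinal) : Prop :=
  ∃ (ι : Type) (E : ι → H →L[ℂ] H), Cardinal.mk ι = n ∧
    (∀ a, E a ∈ M ∧ IsProjOp (E a) ∧ AbelianProj M (E a)) ∧
    (Pairwise fun a b => E a * E b = 0) ∧
    (∀ a b, MvNEquiv M (E a) (E b)) ∧
    (∀ v : H, HasSum (fun a => (E a) v) v)

/-- The scalar operators. -/
def scalarOps (H : Type*) [NormedAddCommGroup H] [InnerProductSpace ℂ H] [CompleteSpace H] :
    Set (H →L[ℂ] H) := Set.range fun c : ℂ => c • (1 : H →L[ℂ] H)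

/-- `M` is a factor. -/
def IsFactor (M : Set (H →L[ℂ] H)) : Prop := centerSet M = scalarOps H

/-- `R` is graded by the self-adjoint unitary `Γ`. -/
def GradedBy (R : Set (H →L[ℂ] H)) (Γ : H →L[ℂ] H) : Prop :=
  IsSAU Γ ∧ ∀ x ∈ R, Γ * x * Γ ∈ R

/-- The von Neumann algebra generated by a (star-closed, unital) set:
its double commutant. -/
def genVN (S : Set (H →L[ℂ] H)) : Set (H →L[ℂ] H) :=
  Set.centralizer (Set.centralizer S)

/-- `c` is the central support of `T` in `M`. -/
def IsCentralSupport (M : Set (H →L[ℂ] H)) (T c : H →L[ℂ] H) : Prop :=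
  c ∈ centerSet M ∧ IsProjOp c ∧ c * T = T ∧
    ∀ d ∈ centerSet M, IsProjOp d → d * T = T → c * d = c

/-!
Finiteness of `E` means that every isometry acting as the identity on the range of `1 - E` is
unitary. Let `v = p + q` be such an isometry in `R`, with `p` even and `q` odd. Finiteness in the
even part gives a polar decomposition of `p` with an even *unitary* factor, so `p = h` may be
assumed nonnegative. The isometry `h + b` (`b` odd) amounts to the isometric block matrix
`!![h, b; b, h]`; closing a feedback loop at its second port yields the element
`h - b * (1 + h)⁻¹ * b`, again an isometry, but even. By finiteness it is unitary, and inverting it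
forces `h + b` to be unitary.
-/

section Feedback

variable {A : Type*} [Ring A] {h b b' k e : A}

/-- The transfer obtained from the block matrix `!![h, b; b, h]` by feeding the second output back,
with sign `-1`, into the second input; `k` stands for the inverse of `1 + h`. -/
def feedback (h b k : A) : A := h - b * k * b

theorem mul_add_mul_add_mul_one_sub_sq_mul (hk : (1 + h) * k = 1) :
    h * k + k * h + k * (1 - h * h) * k = 1 := by
  linear_combination (norm := noncomm_ring) (k - k * h) * hk + hk

theorem feedback_mul_feedback (hk : (1 + h) * k = 1) (hdiag : h * h + b' * b = 1)
    (hoff : h * b + b' * h = 0) : feedback h b' k * feedback h b k = 1 := by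
  unfold feedback
  have hmid := mul_add_mul_add_mul_one_sub_sq_mul hk
  linear_combination (norm := noncomm_ring)
    b' * hmid * b + hdiag - hoff * k * b - b' * k * hoff + b' * k * hdiag * k * b

theorem mul_add_mul_eq_of_feedback_mul_eq_one (hk : (1 + h) * k = 1) (hk' : k * (1 + h) = 1)
    (hdiag : h * h + b' * b = 1) (hoff : h * b + b' * h = 0)
    (he : feedback h b k * e = 1) :
    h * h + b * b' = 1 ∧ h * b' + b * h = 0 := by
  unfold feedback at he
  -- With `V = !![h, b; b, h]` and `V' = !![h, b'; b', h]` the hypotheses say `V' * V = 1`, and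
  -- `r`, `s` are the entries of `1 - V * V'`, whose product with `V` vanishes.
  obtain ⟨r, hr⟩ : ∃ r, r = 1 - (h * h + b * b') := ⟨_, rfl⟩
  obtain ⟨s, hs⟩ : ∃ s, s = -(h * b' + b * h) := ⟨_, rfl⟩
  have hfst : r * h + s * b = 0 := by
    linear_combination (norm := noncomm_ring) hr * h + hs * b - h * hdiag - b * hoff
  have hsnd : r * b + s * h = 0 := by
    linear_combination (norm := noncomm_ring) hr * b + hs * h - b * hdiag - h * hoff
  have hmid := mul_add_mul_add_mul_one_sub_sq_mul hk
  have hmul : (s - r * k * b') * (h - b * k * b) = 0 := by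
    linear_combination (norm := noncomm_ring)
      hsnd - hfst * k * b - r * k * hoff + r * k * hdiag * k * b + r * hmid * b
  have hs_eq : s = r * k * b' := by
    linear_combination (norm := noncomm_ring) hmul * e - (s - r * k * b') * he
  have hr_zero : r = 0 := by
    have hsb : s * b = r * (1 - h) := by
      linear_combination (norm := noncomm_ring) hs_eq * b + r * k * hdiag + r * hk' * (1 - h)
    linear_combination (norm := noncomm_ring) hfst - hsb
  have hs_zero : s = 0 := by rw [hs_eq, hr_zero, zero_mul, zero_mul]
  exact ⟨(sub_eq_zero.1 (hr.symm.trans hr_zero)).symm, neg_eq_zero.1 (hs.symm.trans hs_zero)⟩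

end Feedback

theorem mul_eq_self_of_isStarProjection_star_mul_self {A : Type*} [NonUnitalNormedRing A]
    [StarRing A] [CStarRing A] {s : A} (hs : IsStarProjection (star s * s)) :
    s * (star s * s) = s := by
  rw [← sub_eq_zero, ← CStarRing.star_mul_self_eq_zero_iff]
  have hidem : star s * s * (star s * s) = star s * s := hs.isIdempotentElem
  simp only [star_sub, star_mul, star_star]
  linear_combination (norm := noncomm_ring) hidem * (star s * s) - hidem

theorem isUnit_one_add_of_nonneg {A : Type*} [CStarAlgebra A] [PartialOrder A] [StarOrderedRing A]
    {h : A} (hh : 0 ≤ h) : IsUnit (1 + h) :=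
  CStarAlgebra.isUnit_of_le 1 (le_add_of_nonneg_right hh) isStrictlyPositive_one

section VonNeumannAlgebra

variable {M : VonNeumannAlgebra H}

theorem mem_of_forall_commutant_mul_comm {x : H →L[ℂ] H}
    (hx : ∀ a ∈ M.commutant, a * x = x * a) : x ∈ M := by
  rw [← M.commutant_commutant, VonNeumannAlgebra.mem_commutant_iff]
  exact hx

theorem commute_of_mem_commutant {a x : H →L[ℂ] H} (ha : a ∈ M.commutant) (hx : x ∈ M) :
    Commute a x :=
  (VonNeumannAlgebra.mem_commutant_iff.1 ha x hx).symm

theorem smul_mem_vonNeumannAlgebra (c : ℂ) {x : H →L[ℂ] H} (hx : x ∈ M) : c • x ∈ M :=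
  M.toStarSubalgebra.smul_mem hx c

theorem cfcAbs_mem {x : H →L[ℂ] H} (hx : x ∈ M) : CFC.abs x ∈ M :=
  mem_of_forall_commutant_mul_comm fun _ ha =>
    ((commute_of_mem_commutant ha hx).symm.cfcAbs_right
      (commute_of_mem_commutant (star_mem ha) hx).symm).eq

theorem mem_of_mul_eq_one {x y : H →L[ℂ] H} (hx : x ∈ M) (hxy : x * y = 1) (hyx : y * x = 1) :
    y ∈ M :=
  mem_of_forall_commutant_mul_comm fun a ha => by
    have hax : a * x = x * a := commute_of_mem_commutant ha hx
    linear_combination (norm := noncomm_ring) y * a * hxy - y * hax * y - hyx * a * y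

theorem norm_cfcAbs_apply (x : H →L[ℂ] H) (ξ : H) : ‖CFC.abs x ξ‖ = ‖x ξ‖ := by
  have hsa : star (CFC.abs x) = CFC.abs x := (CFC.abs_nonneg x).isSelfAdjoint
  have hsq : star (CFC.abs x) * CFC.abs x = star x * x := by rw [hsa, CFC.abs_mul_abs]
  rw [← sq_eq_sq₀ (norm_nonneg _) (norm_nonneg _), x.apply_norm_sq_eq_inner_adjoint_left,
    (CFC.abs x).apply_norm_sq_eq_inner_adjoint_left]
  exact congrArg (fun t : H →L[ℂ] H => RCLike.re (inner ℂ (t ξ) ξ)) hsq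

/-- The central projection is the one onto the closed span of `M e H`. -/
theorem exists_central_isStarProjection {e f : H →L[ℂ] H} (he : e ∈ M)
    (hfe : ∀ y ∈ M, f * y * e = 0) :
    ∃ z ∈ M, IsStarProjection z ∧ (∀ y ∈ M, Commute z y) ∧ z * e = e ∧ f * z = 0 := by
  set S : Set H := {ζ | ∃ y ∈ M, ∃ ξ, y (e ξ) = ζ}
  set G := (Submodule.span ℂ S).topologicalClosure
  have hSG : ∀ ζ ∈ S, ζ ∈ G := fun ζ hζ =>
    (Submodule.span ℂ S).le_topologicalClosure (Submodule.subset_span hζ)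
  have hle {K : Submodule ℂ H} (hK : IsClosed (K : Set H)) (hSK : S ⊆ K) : G ≤ K :=
    Submodule.topologicalClosure_minimal _ (Submodule.span_le.2 hSK) hK
  have : CompleteSpace G := (Submodule.isClosed_topologicalClosure _).completeSpace_coe
  have hz : IsStarProjection G.starProjection := isStarProjection_starProjection
  have hinv {a : H →L[ℂ] H} (ha : ∀ ζ ∈ S, a ζ ∈ S) :
      G.starProjection.range ∈ Module.End.invtSubmodule (a : H →ₗ[ℂ] H) := by
    rw [Submodule.range_starProjection]
    exact hle (K := G.comap (a : H →ₗ[ℂ] H))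
      ((Submodule.isClosed_topologicalClosure _).preimage a.continuous) fun ζ hζ => hSG _ (ha ζ hζ)
  have hM : G.starProjection ∈ M :=
    (VonNeumannAlgebra.IsStarProjection.mem_iff hz M).2 fun a ha => hinv <| by
      rintro _ ⟨y, hy, ξ, rfl⟩
      refine ⟨y, hy, a ξ, ?_⟩
      have := commute_of_mem_commutant ha (mul_mem hy he)
      exact (congrArg (· ξ) this.eq).symm
  have hM' : G.starProjection ∈ M.commutant :=
    (VonNeumannAlgebra.IsStarProjection.mem_iff hz _).2 fun a ha => hinv <| by
      rw [M.commutant_commutant] at ha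
      rintro _ ⟨y, hy, ξ, rfl⟩
      exact ⟨a * y, mul_mem ha hy, ξ, rfl⟩
  refine ⟨_, hM, hz, fun y hy => commute_of_mem_commutant hM' hy, ?_, ?_⟩
  · ext ξ
    exact Submodule.starProjection_eq_self_iff.2 (hSG _ ⟨1, one_mem M, ξ, rfl⟩)
  · ext ξ
    refine hle (K := LinearMap.ker (f : H →ₗ[ℂ] H)) f.isClosed_ker ?_
      (G.starProjection_apply_mem ξ)
    rintro _ ⟨y, hy, ξ, rfl⟩
    exact congrArg (· ξ) (hfe y hy)

end VonNeumannAlgebra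

section IsometricGraph

/-- A subspace of `H ⊕ H` that is the graph of an isometry between two subspaces of `H`
intertwining the action of the commutant of `M`. Partial isometries in `M` are encoded as such
subspaces so that Zorn's lemma applies to them ordered by inclusion. -/
structure IsIsometricGraph (M : VonNeumannAlgebra H) (G : Submodule ℂ (WithLp 2 (H × H))) :
    Prop where
  norm_fst_eq : ∀ g ∈ G, ‖g.fst‖ = ‖g.snd‖
  commutant_mem : ∀ a ∈ M.commutant, ∀ g ∈ G, WithLp.toLp 2 (a g.fst, a g.snd) ∈ G

/-- The partial isometry with graph `G` on the first projection of `G`, extended by zero. If `G` is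
the graph of an isometry `w` and `(x, y) ∈ G`, then `(x, -y)` is orthogonal to `G`, so `(x, 0)`
projects onto `(x, y) / 2`; hence the factor `2`. -/
def graphPartialIsometry (G : Submodule ℂ (WithLp 2 (H × H))) [G.HasOrthogonalProjection] :
    H →L[ℂ] H :=
  (2 : ℂ) • WithLp.sndL 2 ℂ H H ∘L G.starProjection ∘L
    ((WithLp.prodContinuousLinearEquiv 2 ℂ H H).symm : H × H →L[ℂ] WithLp 2 (H × H)) ∘L
      ContinuousLinearMap.inl ℂ H H

/-- The graph of the partial isometry in the polar decomposition of `x`. -/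
def polarGraph (x : H →L[ℂ] H) : Submodule ℂ (WithLp 2 (H × H)) :=
  LinearMap.range ((WithLp.linearEquiv 2 ℂ (H × H)).symm.toLinearMap ∘ₗ
    (((CFC.abs x : H →L[ℂ] H) : H →ₗ[ℂ] H).prod (x : H →ₗ[ℂ] H)))

variable {M : VonNeumannAlgebra H} {G G' : Submodule ℂ (WithLp 2 (H × H))}

theorem graphPartialIsometry_apply {H : Type*} [NormedAddCommGroup H] [InnerProductSpace ℂ H]
    (G : Submodule ℂ (WithLp 2 (H × H))) [G.HasOrthogonalProjection] (ξ : H) :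
    graphPartialIsometry G ξ = (2 : ℂ) • (G.starProjection (WithLp.toLp 2 (ξ, 0))).snd :=
  rfl

theorem isIsometricGraph_polarGraph {x : H →L[ℂ] H} (hx : x ∈ M) :
    IsIsometricGraph M (polarGraph x) where
  norm_fst_eq := by
    rintro _ ⟨ξ, rfl⟩
    exact norm_cfcAbs_apply x ξ
  commutant_mem := by
    rintro a ha _ ⟨ξ, rfl⟩
    refine ⟨a ξ, congrArg (WithLp.toLp 2) (Prod.ext ?_ ?_)⟩
    · exact congrArg (· ξ) (commute_of_mem_commutant ha (cfcAbs_mem hx)).eq.symm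
    · exact congrArg (· ξ) (commute_of_mem_commutant ha hx).eq.symm

namespace IsIsometricGraph

theorem topologicalClosure (hG : IsIsometricGraph M G) :
    IsIsometricGraph M G.topologicalClosure where
  norm_fst_eq := closure_minimal hG.norm_fst_eq <|
    isClosed_eq (WithLp.continuous_fst 2 H H).norm (WithLp.continuous_snd 2 H H).norm
  commutant_mem a ha g hg := by
    have hcont : Continuous fun g : WithLp 2 (H × H) => WithLp.toLp 2 (a g.fst, a g.snd) :=
      (WithLp.prod_continuous_toLp 2 H H).comp <|
        (a.continuous.comp (WithLp.continuous_fst 2 H H)).prodMk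
          (a.continuous.comp (WithLp.continuous_snd 2 H H))
    have hmem := map_mem_closure hcont hg (hG.commutant_mem a ha)
    exact hmem

theorem sSup {c : Set (Submodule ℂ (WithLp 2 (H × H)))} (hne : c.Nonempty)
    (hdir : DirectedOn (· ≤ ·) c) (hc : ∀ G ∈ c, IsIsometricGraph M G) :
    IsIsometricGraph M (sSup c) where
  norm_fst_eq g hg := by
    obtain ⟨G, hGc, hgG⟩ := (Submodule.mem_sSup_of_directed hne hdir).1 hg
    exact (hc G hGc).norm_fst_eq g hgG
  commutant_mem a ha g hg := by
    obtain ⟨G, hGc, hgG⟩ := (Submodule.mem_sSup_of_directed hne hdir).1 hg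
    exact le_sSup hGc ((hc G hGc).commutant_mem a ha g hgG)

theorem sup (hG : IsIsometricGraph M G) (hG' : IsIsometricGraph M G')
    (hfst : ∀ g ∈ G, ∀ g' ∈ G', inner ℂ g.fst g'.fst = 0)
    (hsnd : ∀ g ∈ G, ∀ g' ∈ G', inner ℂ g.snd g'.snd = 0) :
    IsIsometricGraph M (G ⊔ G') where
  norm_fst_eq := by
    intro _ hg
    obtain ⟨g, hgG, g', hgG', rfl⟩ := Submodule.mem_sup.1 hg
    rw [WithLp.add_fst, WithLp.add_snd, ← sq_eq_sq₀ (norm_nonneg _) (norm_nonneg _), sq, sq,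
      norm_add_sq_eq_norm_sq_add_norm_sq_of_inner_eq_zero _ _ (hfst g hgG g' hgG'),
      norm_add_sq_eq_norm_sq_add_norm_sq_of_inner_eq_zero _ _ (hsnd g hgG g' hgG'),
      hG.norm_fst_eq g hgG, hG'.norm_fst_eq g' hgG']
  commutant_mem := by
    intro a ha _ hg
    obtain ⟨g, hgG, g', hgG', rfl⟩ := Submodule.mem_sup.1 hg
    rw [WithLp.add_fst, WithLp.add_snd, map_add, map_add]
    exact Submodule.add_mem_sup (hG.commutant_mem a ha g hgG) (hG'.commutant_mem a ha g' hgG')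

theorem exists_maximal_ge (hG : IsIsometricGraph M G) :
    ∃ K, G ≤ K ∧ Maximal (IsIsometricGraph M) K :=
  zorn_le_nonempty₀ {K | IsIsometricGraph M K} (fun _ hc hchain K hK =>
    ⟨_, IsIsometricGraph.sSup ⟨K, hK⟩ hchain.directedOn hc, fun _ => le_sSup⟩) G hG

theorem inner_fst_eq (hG : IsIsometricGraph M G) {g g' : WithLp 2 (H × H)} (hg : g ∈ G)
    (hg' : g' ∈ G) : inner ℂ g.fst g'.fst = inner ℂ g.snd g'.snd := by
  have hadd := hG.norm_fst_eq _ (add_mem hg hg')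
  have hsub := hG.norm_fst_eq _ (sub_mem hg hg')
  have haddI := hG.norm_fst_eq _ (add_mem hg (G.smul_mem RCLike.I hg'))
  have hsubI := hG.norm_fst_eq _ (sub_mem hg (G.smul_mem RCLike.I hg'))
  simp only [WithLp.add_fst, WithLp.add_snd, WithLp.sub_fst, WithLp.sub_snd, WithLp.smul_fst,
    WithLp.smul_snd] at hadd hsub haddI hsubI
  rw [inner_eq_sum_norm_sq_div_four, inner_eq_sum_norm_sq_div_four, hadd, hsub, haddI, hsubI]

variable [G.HasOrthogonalProjection]

theorem graphPartialIsometry_mem (hG : IsIsometricGraph M G) : graphPartialIsometry G ∈ M := by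
  refine mem_of_forall_commutant_mul_comm fun a ha => ?_
  ext ξ
  set g := G.starProjection (WithLp.toLp 2 (ξ, 0)) with hg
  have hgG : g ∈ G := Submodule.starProjection_apply_mem _ _
  have hproj : G.starProjection (WithLp.toLp 2 (a ξ, 0)) = WithLp.toLp 2 (a g.fst, a g.snd) := by
    refine Submodule.eq_starProjection_of_mem_of_inner_eq_zero (hG.commutant_mem a ha g hgG)
      fun t ht => ?_
    have hperp := G.starProjection_inner_eq_zero (WithLp.toLp 2 (ξ, 0)) _
      (hG.commutant_mem (star a) (star_mem ha) t ht)
    rw [← hg] at hperp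
    simpa [WithLp.prod_inner_apply, ContinuousLinearMap.star_eq_adjoint,
      ContinuousLinearMap.adjoint_inner_right] using hperp
  change a (graphPartialIsometry G ξ) = graphPartialIsometry G (a ξ)
  rw [graphPartialIsometry_apply, graphPartialIsometry_apply, hproj, map_smul]
  rfl

theorem graphPartialIsometry_fst (hG : IsIsometricGraph M G) {g : WithLp 2 (H × H)} (hg : g ∈ G) :
    graphPartialIsometry G g.fst = g.snd := by
  have hproj : G.starProjection (WithLp.toLp 2 (g.fst, 0)) = (2⁻¹ : ℂ) • g := by
    refine Submodule.eq_starProjection_of_mem_of_inner_eq_zero (G.smul_mem _ hg) fun t ht => ?_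
    simp [WithLp.prod_inner_apply, inner_sub_left, inner_smul_left, hG.inner_fst_eq hg ht,
      map_ofNat]
    ring
  rw [graphPartialIsometry_apply, hproj, WithLp.smul_snd, smul_inv_smul₀ two_ne_zero]

theorem star_graphPartialIsometry_snd (hG : IsIsometricGraph M G) {g : WithLp 2 (H × H)}
    (hg : g ∈ G) : star (graphPartialIsometry G) g.snd = g.fst := by
  refine ext_inner_left ℂ fun t => ?_
  set p := G.starProjection (WithLp.toLp 2 (t, 0)) with hp
  have hperp := G.starProjection_inner_eq_zero (WithLp.toLp 2 (t, 0)) g hg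
  have hpg := hG.inner_fst_eq (Submodule.starProjection_apply_mem _ _ : p ∈ G) hg
  rw [ContinuousLinearMap.star_eq_adjoint, ContinuousLinearMap.adjoint_inner_right,
    graphPartialIsometry_apply, ← hp, inner_smul_left, map_ofNat]
  simp only [WithLp.prod_inner_apply, WithLp.ofLp_fst, WithLp.ofLp_snd, inner_sub_left,
    inner_zero_left, ← hp] at hperp
  linear_combination -hpg - hperp

theorem graphPartialIsometry_mul_star_mul_self (hG : IsIsometricGraph M G) :
    graphPartialIsometry G * star (graphPartialIsometry G) * graphPartialIsometry G =
      graphPartialIsometry G := by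
  ext ξ
  have hp : (2 : ℂ) • G.starProjection (WithLp.toLp 2 (ξ, 0)) ∈ G :=
    G.smul_mem _ (Submodule.starProjection_apply_mem _ _)
  calc graphPartialIsometry G (star (graphPartialIsometry G) (graphPartialIsometry G ξ))
    _ = graphPartialIsometry G ((2 : ℂ) • G.starProjection (WithLp.toLp 2 (ξ, 0))).fst :=
      congrArg _ (hG.star_graphPartialIsometry_snd hp)
    _ = graphPartialIsometry G ξ := hG.graphPartialIsometry_fst hp

theorem graphPartialIsometry_mul_cfcAbs (hG : IsIsometricGraph M G) {x : H →L[ℂ] H}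
    (hx : polarGraph x ≤ G) : graphPartialIsometry G * CFC.abs x = x := by
  ext ξ
  have hmem : WithLp.toLp 2 (CFC.abs x ξ, x ξ) ∈ G := hx ⟨ξ, rfl⟩
  calc graphPartialIsometry G (CFC.abs x ξ)
    _ = graphPartialIsometry G (WithLp.toLp 2 (CFC.abs x ξ, x ξ)).fst := rfl
    _ = x ξ := hG.graphPartialIsometry_fst hmem

theorem sup_polarGraph (hG : IsIsometricGraph M G) {t : H →L[ℂ] H} (ht : t ∈ M)
    (hwt : star (graphPartialIsometry G) * t = 0) (htw : t * star (graphPartialIsometry G) = 0) :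
    IsIsometricGraph M (G ⊔ polarGraph t) := by
  refine hG.sup (isIsometricGraph_polarGraph ht) ?_ ?_
  · rintro g hg _ ⟨ξ, rfl⟩
    have habs : CFC.abs t g.fst = 0 := by
      rw [← norm_eq_zero, norm_cfcAbs_apply, norm_eq_zero, ← hG.star_graphPartialIsometry_snd hg]
      exact congrArg (· g.snd) htw
    calc inner ℂ g.fst (CFC.abs t ξ)
      _ = inner ℂ (CFC.abs t g.fst) ξ := by
        rw [← ContinuousLinearMap.adjoint_inner_left, ← ContinuousLinearMap.star_eq_adjoint,
          (CFC.abs_nonneg t).isSelfAdjoint.star_eq]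
      _ = 0 := by rw [habs, inner_zero_left]
  · rintro g hg _ ⟨ξ, rfl⟩
    calc inner ℂ g.snd (t ξ)
      _ = inner ℂ g.fst (star (graphPartialIsometry G) (t ξ)) := by
        rw [ContinuousLinearMap.star_eq_adjoint, ContinuousLinearMap.adjoint_inner_right,
          hG.graphPartialIsometry_fst hg]
      _ = inner ℂ g.fst 0 := congrArg _ (congrArg (· ξ) hwt)
      _ = 0 := inner_zero_right _

theorem eq_zero_of_maximal (hG : Maximal (IsIsometricGraph M) G) {t : H →L[ℂ] H} (ht : t ∈ M)
    (hwt : star (graphPartialIsometry G) * t = 0) (htw : t * star (graphPartialIsometry G) = 0) :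
    t = 0 := by
  have hle : polarGraph t ≤ G :=
    le_sup_right.trans (hG.le_of_ge (hG.prop.sup_polarGraph ht hwt htw) le_sup_left)
  ext ξ
  have hmem : WithLp.toLp 2 (CFC.abs t ξ, t ξ) ∈ G := hle ⟨ξ, rfl⟩
  have hfst : CFC.abs t ξ = 0 :=
    (hG.prop.star_graphPartialIsometry_snd hmem).symm.trans (congrArg (· ξ) hwt)
  exact norm_eq_zero.1 (by rw [← norm_cfcAbs_apply, hfst, norm_zero])

end IsIsometricGraph

/-- The last condition says that `w` is an extreme point of the unit ball of `M`. -/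
theorem exists_maximal_partialIsometry_mul_cfcAbs {x : H →L[ℂ] H} (hx : x ∈ M) :
    ∃ w ∈ M, w * star w * w = w ∧ w * CFC.abs x = x ∧
      ∀ y ∈ M, (1 - w * star w) * y * (1 - star w * w) = 0 := by
  obtain ⟨G, hxG, hG⟩ := (isIsometricGraph_polarGraph hx).exists_maximal_ge
  have hclosed : IsClosed (G : Set (WithLp 2 (H × H))) :=
    (hG.eq_of_le hG.prop.topologicalClosure G.le_topologicalClosure) ▸
      G.isClosed_topologicalClosure
  have : CompleteSpace G := hclosed.completeSpace_coe
  have hwM := hG.prop.graphPartialIsometry_mem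
  have hw := hG.prop.graphPartialIsometry_mul_star_mul_self
  have hzero {t : H →L[ℂ] H} := IsIsometricGraph.eq_zero_of_maximal hG (t := t)
  have hwx := hG.prop.graphPartialIsometry_mul_cfcAbs hxG
  generalize graphPartialIsometry G = w at *
  have hw' : star w * w * star w = star w := by simpa [mul_assoc] using congrArg star hw
  refine ⟨w, hwM, hw, hwx, fun y hy => hzero ?_ ?_ ?_⟩
  · exact mul_mem (mul_mem (sub_mem (one_mem M) (mul_mem hwM (star_mem hwM))) hy)
      (sub_mem (one_mem M) (mul_mem (star_mem hwM) hwM))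
  · linear_combination (norm := noncomm_ring) -hw' * y * (1 - star w * w)
  · linear_combination (norm := noncomm_ring) -(1 - w * star w) * y * hw'

end IsometricGraph

section FiniteProjection

/-- `x` acts as the identity on the range of `1 - E`; for a projection `E` this says that
`x = c ⊕ 1` with `c` in the corner at `E`. Passing from `c` to `x` turns partial isometries with
initial projection `E` into isometries. -/
def FixesCompl {A : Type*} [Ring A] (E x : A) : Prop :=
  x * (1 - E) = 1 - E ∧ (1 - E) * x = 1 - E

section Ring

variable {A : Type*} [Ring A] {E x : A}

theorem FixesCompl.commute (hx : FixesCompl E x) : Commute E x := by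
  have hcomm : E * x = x * E := by linear_combination (norm := noncomm_ring) hx.1 - hx.2
  exact hcomm

protected theorem FixesCompl.star [StarRing A] (hE : star E = E) (hx : FixesCompl E x) :
    FixesCompl E (star x) :=
  ⟨by simpa [hE] using congrArg star hx.2, by simpa [hE] using congrArg star hx.1⟩

end Ring

variable {M : VonNeumannAlgebra H} {E x w : H →L[ℂ] H}

theorem FiniteProj.mul_star_eq_one (hfin : FiniteProj (M : Set (H →L[ℂ] H)) E) (hE : E ∈ M)
    (hEp : IsProjOp E) (hx : x ∈ M) (hxE : FixesCompl E x) (hiso : star x * x = 1) :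
    x * star x = 1 := by
  obtain ⟨hEE, hEsa⟩ := hEp
  have hcomm : E * x = x * E := hxE.commute
  have hcomm' : E * star x = star x * E := (hxE.star hEsa).commute
  have hf : E * (x * star x) = E := by
    refine hfin _ (mul_mem hE (mul_mem hx (star_mem hx))) ⟨?_, ?_⟩ ⟨?_, ?_⟩
      ⟨E * star x, mul_mem hE (star_mem hx), ?_, ?_⟩
    · linear_combination (norm := noncomm_ring) -E * x * hcomm' * x * star x +
        E * x * E * hiso * star x - E * hcomm * star x + hEE * x * star x
    · simp only [star_mul, star_star, hEsa]
      linear_combination (norm := noncomm_ring) -x * hcomm' - hcomm * star x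
    · linear_combination (norm := noncomm_ring)
        -E * x * hcomm' - E * hcomm * star x + hEE * x * star x
    · linear_combination (norm := noncomm_ring) hEE * x * star x
    · simp only [star_mul, star_star, hEsa]
      linear_combination (norm := noncomm_ring) x * hEE * star x - hcomm * star x
    · simp only [star_mul, star_star, hEsa]
      linear_combination (norm := noncomm_ring) E * hiso * E + hEE
  linear_combination (norm := noncomm_ring) hf + hxE.2 * star x + (hxE.star hEsa).2

theorem finiteProj_of_forall_mul_star_eq_one (hE : E ∈ M) (hEp : IsProjOp E)
    (h : ∀ x ∈ M, FixesCompl E x → star x * x = 1 → x * star x = 1) :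
    FiniteProj (M : Set (H →L[ℂ] H)) E := by
  rintro f - hf hfE ⟨v, hv, hvf, hvE⟩
  obtain ⟨hEE, hEsa⟩ := hEp
  have hFv : (1 - E) * v = 0 := by
    rw [← CStarRing.mul_star_self_eq_zero_iff]
    simp only [star_mul, star_sub, star_one, hEsa]
    linear_combination (norm := noncomm_ring) (1 - E) * hvE * (1 - E) + (E - 1) * hEE
  have hvF : v * (1 - E) = 0 := by
    have hvv : v * f = v := by
      rw [← hvf]
      exact mul_eq_self_of_isStarProjection_star_mul_self (hvf ▸ ⟨hf.1, hf.2⟩)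
    linear_combination (norm := noncomm_ring) -v * hfE.1 - hvv * (1 - E)
  have hFv' : (1 - E) * star v = 0 := by simpa [hEsa] using congrArg star hvF
  have hvF' : star v * (1 - E) = 0 := by simpa [hEsa] using congrArg star hFv
  have hx := h (star v + (1 - E)) (add_mem (star_mem hv) (sub_mem (one_mem M) hE)) ⟨?_, ?_⟩ ?_
  all_goals simp only [star_add, star_sub, star_one, star_star, hEsa] at *
  · linear_combination (norm := noncomm_ring) hx - hvf - hvF' - hFv - hEE
  · linear_combination (norm := noncomm_ring) hvF' + hEE
  · linear_combination (norm := noncomm_ring) hFv' + hEE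
  · linear_combination (norm := noncomm_ring) hvE + hvF + hFv' + hEE

theorem FixesCompl.cfcAbs (hE : star E = E) (hx : FixesCompl E x) :
    FixesCompl E (CFC.abs x) := by
  have hsq : CFC.abs x * CFC.abs x = star x * x := CFC.abs_mul_abs x
  have hright : CFC.abs x * (1 - E) = 1 - E := by
    rw [← sub_eq_zero, ← (isUnit_one_add_of_nonneg (CFC.abs_nonneg x)).mul_right_eq_zero]
    linear_combination (norm := noncomm_ring) hsq * (1 - E) + star x * hx.1 + (hx.star hE).1
  refine ⟨hright, ?_⟩
  simpa [hE, (CFC.abs_nonneg x).isSelfAdjoint.star_eq] using congrArg star hright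

theorem FixesCompl.of_mul_cfcAbs (hE : star E = E) (hx : FixesCompl E x)
    (hw : w * star w * w = w) (hwx : w * CFC.abs x = x) : FixesCompl E w := by
  have hright : w * (1 - E) = 1 - E := by
    linear_combination (norm := noncomm_ring) hx.1 + hwx * (1 - E) - w * (hx.cfcAbs hE).1
  have hright' : (1 - E) * star w = 1 - E := by
    simpa [hE] using congrArg star hright
  have hinit : (1 - star w * w) * (1 - E) = 0 := by
    rw [← CStarRing.star_mul_self_eq_zero_iff]
    simp only [star_mul, star_sub, star_one, star_star, hE]
    linear_combination (norm := noncomm_ring)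
      (1 - E) * star w * hw * (1 - E) - hright' * w * (1 - E) - (1 - E) * hright
  have hleft' : star w * (1 - E) = 1 - E := by
    linear_combination (norm := noncomm_ring) -hinit - star w * hright
  exact ⟨hright, by simpa [hE] using congrArg star hleft'⟩

theorem FiniteProj.exists_unitary_mul_cfcAbs (hfin : FiniteProj (M : Set (H →L[ℂ] H)) E)
    (hE : E ∈ M) (hEp : IsProjOp E) (hx : x ∈ M) (hxE : FixesCompl E x) :
    ∃ w ∈ M, FixesCompl E w ∧ star w * w = 1 ∧ w * star w = 1 ∧ w * CFC.abs x = x := by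
  obtain ⟨w, hwM, hw, hwx, hmax⟩ := exists_maximal_partialIsometry_mul_cfcAbs hx
  have hwE : FixesCompl E w := hxE.of_mul_cfcAbs hEp.2 hw hwx
  obtain ⟨z, hzM, hzp, hzcomm, hz, hwz⟩ := exists_central_isStarProjection
    (sub_mem (one_mem M) (mul_mem (star_mem hwM) hwM)) hmax
  have hzz : z * z = z := hzp.isIdempotentElem
  have hzsa : star z = z := hzp.isSelfAdjoint
  have hzw : z * w = w * z := hzcomm _ hwM
  have hzw' : z * star w = star w * z := hzcomm _ (star_mem hwM)
  have hzE : z * E = E * z := hzcomm _ hE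
  suffices hiso : star w * w = 1 from
    ⟨w, hwM, hwE, hiso, hfin.mul_star_eq_one hE hEp hwM hwE hiso, hwx⟩
  have hvE : FixesCompl E (z * star w + (1 - z)) := by
    obtain ⟨hright, hleft⟩ := hwE.star hEp.2
    constructor
    · linear_combination (norm := noncomm_ring) z * hright
    · linear_combination (norm := noncomm_ring) hzE * star w + z * hleft - hzE
  have hv := hfin.mul_star_eq_one hE hEp
    (add_mem (mul_mem hzM (star_mem hwM)) (sub_mem (one_mem M) hzM)) hvE
  simp only [star_add, star_mul, star_star, star_sub, star_one, hzsa] at hv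
  have hzinit : z * star w * w = z := by
    have hv' := hv (by
      linear_combination (norm := noncomm_ring)
        w * hzz * star w - w * hzz - hzz * star w + hzz + w * hzw' - hwz)
    linear_combination (norm := noncomm_ring) hv' + z * star w * hzw + z * hzw' * w -
      hzz * star w * w + hzz * star w - z * hzw' + hzw * z + w * hzz - hzz
  linear_combination (norm := noncomm_ring) hz + hzinit

end FiniteProjection

section Graded

variable {R : VonNeumannAlgebra H} {Γ E h b p q r v : H →L[ℂ] H}

theorem evenPart_eq_centralizer (hΓ : IsSAU Γ) :
    evenPart (R : Set (H →L[ℂ] H)) Γ = Set.centralizer (insert Γ (R.commutant : Set _)) := by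
  ext x
  constructor
  · rintro ⟨hx, hΓx⟩ a (rfl | ha)
    · linear_combination (norm := noncomm_ring) hΓx * a - a * x * hΓ.2
    · exact commute_of_mem_commutant ha hx
  · intro hx
    refine ⟨mem_of_forall_commutant_mul_comm fun a ha => hx a (Or.inr ha), ?_⟩
    linear_combination (norm := noncomm_ring) hx Γ (Or.inl rfl) * Γ + x * hΓ.2

/-- The even part of a von Neumann algebra, as a von Neumann algebra in its own right. -/
def evenVonNeumannAlgebra (R : VonNeumannAlgebra H) (hΓ : IsSAU Γ) : VonNeumannAlgebra H where
  carrier := evenPart (R : Set (H →L[ℂ] H)) Γ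
  mul_mem' := by
    rintro x y ⟨hx, hΓx⟩ ⟨hy, hΓy⟩
    refine ⟨mul_mem hx hy, ?_⟩
    linear_combination (norm := noncomm_ring)
      hΓx * y + Γ * x * Γ * hΓy - Γ * x * hΓ.2 * y * Γ
  add_mem' := by
    rintro x y ⟨hx, hΓx⟩ ⟨hy, hΓy⟩
    exact ⟨add_mem hx hy, by rw [mul_add, add_mul, hΓx, hΓy]⟩
  algebraMap_mem' c := by
    refine ⟨R.algebraMap_mem' c, ?_⟩
    rw [← Algebra.commutes, mul_assoc, hΓ.2, mul_one]
  star_mem' := by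
    rintro x ⟨hx, hΓx⟩
    exact ⟨star_mem hx, by simpa [hΓ.1, mul_assoc] using congrArg star hΓx⟩
  centralizer_centralizer' := by
    rw [evenPart_eq_centralizer hΓ, Set.centralizer_centralizer_centralizer]

theorem star_mem_oddPart (hΓ : IsSAU Γ) (hb : b ∈ oddPart (R : Set (H →L[ℂ] H)) Γ) :
    star b ∈ oddPart (R : Set (H →L[ℂ] H)) Γ :=
  ⟨star_mem hb.1, by simpa [hΓ.1, mul_assoc] using congrArg star hb.2⟩

theorem add_mem_oddPart (hp : p ∈ oddPart (R : Set (H →L[ℂ] H)) Γ)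
    (hq : q ∈ oddPart (R : Set (H →L[ℂ] H)) Γ) :
    p + q ∈ oddPart (R : Set (H →L[ℂ] H)) Γ :=
  ⟨add_mem hp.1 hq.1, by rw [mul_add, add_mul, hp.2, hq.2, neg_add]⟩

theorem even_mul_odd_mem_oddPart (hΓ : IsSAU Γ) (hh : h ∈ evenPart (R : Set (H →L[ℂ] H)) Γ)
    (hb : b ∈ oddPart (R : Set (H →L[ℂ] H)) Γ) :
    h * b ∈ oddPart (R : Set (H →L[ℂ] H)) Γ := by
  refine ⟨mul_mem hh.1 hb.1, ?_⟩
  linear_combination (norm := noncomm_ring) Γ * h * Γ * hb.2 - hh.2 * b - Γ * h * hΓ.2 * b * Γ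

theorem odd_mul_even_mem_oddPart (hΓ : IsSAU Γ) (hb : b ∈ oddPart (R : Set (H →L[ℂ] H)) Γ)
    (hh : h ∈ evenPart (R : Set (H →L[ℂ] H)) Γ) :
    b * h ∈ oddPart (R : Set (H →L[ℂ] H)) Γ := by
  refine ⟨mul_mem hb.1 hh.1, ?_⟩
  linear_combination (norm := noncomm_ring) hb.2 * h + Γ * b * Γ * hh.2 - Γ * b * hΓ.2 * h * Γ

theorem odd_mul_odd_mem_evenPart (hΓ : IsSAU Γ) (hp : p ∈ oddPart (R : Set (H →L[ℂ] H)) Γ)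
    (hq : q ∈ oddPart (R : Set (H →L[ℂ] H)) Γ) :
    p * q ∈ evenPart (R : Set (H →L[ℂ] H)) Γ := by
  refine ⟨mul_mem hp.1 hq.1, ?_⟩
  linear_combination (norm := noncomm_ring) Γ * p * Γ * hq.2 - hp.2 * q - Γ * p * hΓ.2 * q * Γ

theorem eq_and_eq_zero_of_even_add_odd_eq (hp : p ∈ evenPart (R : Set (H →L[ℂ] H)) Γ)
    (hq : q ∈ oddPart (R : Set (H →L[ℂ] H)) Γ) (hr : r ∈ evenPart (R : Set (H →L[ℂ] H)) Γ)
    (hpqr : p + q = r) : p = r ∧ q = 0 := by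
  have hq_zero : q = 0 := by
    have hq_neg : q = -q := by
      linear_combination (norm := noncomm_ring) hpqr - Γ * hpqr * Γ + hp.2 - hr.2 + hq.2
    have : IsAddTorsionFree (H →L[ℂ] H) := .of_isTorsionFree ℂ _
    exact self_eq_neg.1 hq_neg
  exact ⟨by rw [← hpqr, hq_zero, add_zero], hq_zero⟩

theorem exists_even_add_odd_eq (hΓ : IsSAU Γ) (hinv : ∀ x ∈ R, Γ * x * Γ ∈ R) (hv : v ∈ R) :
    ∃ p ∈ evenPart (R : Set (H →L[ℂ] H)) Γ, ∃ q ∈ oddPart (R : Set (H →L[ℂ] H)) Γ,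
      p + q = v := by
  have hΓΓ : Γ * (Γ * v * Γ) * Γ = v := by
    linear_combination (norm := noncomm_ring) hΓ.2 * v * (Γ * Γ) + v * hΓ.2
  refine ⟨(2⁻¹ : ℂ) • (v + Γ * v * Γ),
    ⟨smul_mem_vonNeumannAlgebra _ (add_mem hv (hinv v hv)), ?_⟩,
    (2⁻¹ : ℂ) • (v - Γ * v * Γ),
    ⟨smul_mem_vonNeumannAlgebra _ (sub_mem hv (hinv v hv)), ?_⟩, by module⟩
  · rw [mul_smul_comm, smul_mul_assoc, mul_add, add_mul, hΓΓ, add_comm]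
  · rw [mul_smul_comm, smul_mul_assoc, mul_sub, sub_mul, hΓΓ, ← smul_neg, neg_sub]

theorem mul_star_eq_one_of_nonneg_add_odd (hΓ : IsSAU Γ)
    (hE : E ∈ evenPart (R : Set (H →L[ℂ] H)) Γ) (hEp : IsProjOp E)
    (hfin : FiniteProj (evenPart (R : Set (H →L[ℂ] H)) Γ) E)
    (hh : h ∈ evenPart (R : Set (H →L[ℂ] H)) Γ) (hpos : 0 ≤ h) (hhE : FixesCompl E h)
    (hb : b ∈ oddPart (R : Set (H →L[ℂ] H)) Γ) (hbE : b * (1 - E) = 0) (hEb : (1 - E) * b = 0)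
    (hiso : star (h + b) * (h + b) = 1) : (h + b) * star (h + b) = 1 := by
  have hsa : star h = h := hpos.isSelfAdjoint
  have hone : 1 ∈ evenVonNeumannAlgebra R hΓ := one_mem _
  have hb' := star_mem_oddPart hΓ hb
  have hdiagR : h * h + star b * b ∈ evenVonNeumannAlgebra R hΓ :=
    add_mem (mul_mem hh hh) (odd_mul_odd_mem_evenPart hΓ hb' hb)
  have hoffR := add_mem_oddPart (even_mul_odd_mem_oddPart hΓ hh hb)
    (odd_mul_even_mem_oddPart hΓ hb' hh)
  rw [star_add, hsa] at hiso ⊢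
  obtain ⟨hdiag, hoff⟩ : h * h + star b * b = 1 ∧ h * b + star b * h = 0 :=
    eq_and_eq_zero_of_even_add_odd_eq hdiagR hoffR hone (by
      linear_combination (norm := noncomm_ring) hiso)
  obtain ⟨k, hk, hk'⟩ : ∃ k, (1 + h) * k = 1 ∧ k * (1 + h) = 1 :=
    isUnit_iff_exists.1 (isUnit_one_add_of_nonneg hpos)
  have hksa : star k = k := by
    have hk_star : star k * (1 + h) = 1 := by simpa [hsa] using congrArg star hk
    exact left_inv_eq_right_inv hk_star hk
  have hkR : k ∈ evenVonNeumannAlgebra R hΓ := mem_of_mul_eq_one (add_mem hone hh) hk hk'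
  have hdR : feedback h b k ∈ evenVonNeumannAlgebra R hΓ :=
    sub_mem hh (odd_mul_odd_mem_evenPart hΓ (odd_mul_even_mem_oddPart hΓ hb hkR) hb)
  have hdE : FixesCompl E (feedback h b k) := by
    unfold feedback
    constructor
    · linear_combination (norm := noncomm_ring) hhE.1 - b * k * hbE
    · linear_combination (norm := noncomm_ring) hhE.2 - hEb * k * b
  have hd_unitary := FiniteProj.mul_star_eq_one hfin hE hEp hdR hdE (by
    simpa [feedback, hsa, hksa, mul_assoc] using feedback_mul_feedback hk hdiag hoff)
  obtain ⟨hdiag', hoff'⟩ := mul_add_mul_eq_of_feedback_mul_eq_one hk hk' hdiag hoff hd_unitary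
  linear_combination (norm := noncomm_ring) hdiag' + hoff'

theorem mul_star_eq_one_of_finiteProj_evenPart (hΓ : IsSAU Γ) (hinv : ∀ x ∈ R, Γ * x * Γ ∈ R)
    (hE : E ∈ evenPart (R : Set (H →L[ℂ] H)) Γ) (hEp : IsProjOp E)
    (hfin : FiniteProj (evenPart (R : Set (H →L[ℂ] H)) Γ) E)
    (hv : v ∈ R) (hvE : FixesCompl E v) (hiso : star v * v = 1) : v * star v = 1 := by
  obtain ⟨p, hp, q, hq, rfl⟩ := exists_even_add_odd_eq hΓ hinv hv
  have hF : 1 - E ∈ evenVonNeumannAlgebra R hΓ := sub_mem (one_mem _) hE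
  have hpF : p * (1 - E) ∈ evenVonNeumannAlgebra R hΓ := mul_mem hp hF
  have hFp : (1 - E) * p ∈ evenVonNeumannAlgebra R hΓ := mul_mem hF hp
  obtain ⟨hpE, hqE⟩ : p * (1 - E) = 1 - E ∧ q * (1 - E) = 0 :=
    eq_and_eq_zero_of_even_add_odd_eq hpF (odd_mul_even_mem_oddPart hΓ hq hF) hF
      (by rw [← add_mul, hvE.1])
  obtain ⟨hEp', hEq⟩ : (1 - E) * p = 1 - E ∧ (1 - E) * q = 0 :=
    eq_and_eq_zero_of_even_add_odd_eq hFp (even_mul_odd_mem_oddPart hΓ hF hq) hF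
      (by rw [← mul_add, hvE.2])
  obtain ⟨w, hw, hwE, hww, hww', hwp⟩ := FiniteProj.exists_unitary_mul_cfcAbs
    (M := evenVonNeumannAlgebra R hΓ) hfin hE hEp hp ⟨hpE, hEp'⟩
  have hu : star w * (p + q) = CFC.abs p + star w * q := by
    linear_combination (norm := noncomm_ring) hww * CFC.abs p - star w * hwp
  have hu_iso : star (star w * (p + q)) * (star w * (p + q)) = 1 := by
    simp only [star_mul, star_star]
    linear_combination (norm := noncomm_ring) star (p + q) * hww' * (p + q) + hiso
  have hw' : star w ∈ evenVonNeumannAlgebra R hΓ := star_mem hw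
  have hu_unitary : star w * (p + q) * star (star w * (p + q)) = 1 := by
    rw [hu] at hu_iso ⊢
    refine mul_star_eq_one_of_nonneg_add_odd hΓ hE hEp hfin
      (cfcAbs_mem (M := evenVonNeumannAlgebra R hΓ) hp) (CFC.abs_nonneg p)
      (FixesCompl.cfcAbs hEp.2 ⟨hpE, hEp'⟩) (even_mul_odd_mem_oddPart hΓ hw' hq) ?_ ?_ hu_iso
    · rw [mul_assoc, hqE, mul_zero]
    · rw [← mul_assoc, (hwE.star hEp.2).2, hEq]
  simp only [star_mul, star_star] at hu_unitary
  linear_combination (norm := noncomm_ring) w * hu_unitary * star w + hww' -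
    hww' * (p + q) * star (p + q) - w * star w * (p + q) * star (p + q) * hww'

end Graded

theorem stmt_8_general (R : VonNeumannAlgebra H) (Γ : H →L[ℂ] H) (hΓ : IsSAU Γ)
    (hinv : ∀ x ∈ R, Γ * x * Γ ∈ R) (E : H →L[ℂ] H)
    (hE : E ∈ evenPart (R : Set (H →L[ℂ] H)) Γ) (hEp : IsProjOp E)
    (hfin : FiniteProj (evenPart (R : Set (H →L[ℂ] H)) Γ) E) :
    FiniteProj (R : Set (H →L[ℂ] H)) E :=
  finiteProj_of_forall_mul_star_eq_one hE.1 hEp fun _ hv hvE hiso =>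
    mul_star_eq_one_of_finiteProj_evenPart hΓ hinv hE hEp hfin hv hvE hiso

/-- in a graded von Neumann algebra with an odd unitary, a projection
in `R⁰` finite relative to `R⁰` is finite relative to `R`. -/
theorem stmt_8 (R : VonNeumannAlgebra H) (Γ : H →L[ℂ] H) (hΓ : IsSAU Γ)
    (hinv : ∀ x ∈ R, Γ * x * Γ ∈ R) (U : H →L[ℂ] H)
    (hU : U ∈ oddPart (R : Set (H →L[ℂ] H)) Γ)
    (hUun : star U * U = 1 ∧ U * star U = 1)
    (E : H →L[ℂ] H) (hE : E ∈ evenPart (R : Set (H →L[ℂ] H)) Γ) (hEp : IsProjOp E)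
    (hfin : FiniteProj (evenPart (R : Set (H →L[ℂ] H)) Γ) E) :
    FiniteProj (R : Set (H →L[ℂ] H)) E :=
  stmt_8_general R Γ hΓ hinv E hE hEp hfin
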